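/- For every real symmetric n×n matrix Z, the following are equivalent: (a) both I_n + Z and I_n − Z are positive definite — equivalently, the pair (i(I_n + Z), −i(I_n − Z)) lies in X × X̄; (b) the operator norm of Z satisfies ‖Z‖ < 1. Hence (Theorem on the symplectic group, part (i)) Λ⁺ = {Z̃ : Z ∈ Sym(n,ℝ), ‖Z‖ < 1}. -/

import Mathlib

open Matrix

/-- for a real symmetric `n×n` matrix `Z`, both `I + Z` and `I − Z` are
positive definite (equivalently `(i(I+Z), −i(I−Z)) ∈ X × X̄`) if and only if the
operator norm of `Z` on Euclidean `ℝⁿ` is `< 1`.  Hence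
`Λ⁺ = {Z̃ : Z ∈ Sym(n,ℝ), ‖Z‖ < 1}`. -/
theorem stmt_19 (n : ℕ) (Z : Matrix (Fin n) (Fin n) ℝ) (hZ : Z.IsSymm) :
    (((1 : Matrix (Fin n) (Fin n) ℝ) + Z).PosDef ∧
      ((1 : Matrix (Fin n) (Fin n) ℝ) - Z).PosDef) ↔
    ‖(Matrix.toEuclideanCLM (𝕜 := ℝ) Z :
        EuclideanSpace ℝ (Fin n) →L[ℝ] EuclideanSpace ℝ (Fin n))‖ < 1 := by
  have hH : Z.IsHermitian := by
    rw [Matrix.IsHermitian, Matrix.conjTranspose_eq_transpose_of_trivial]; exact hZ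
  have hin : ∀ x y : EuclideanSpace ℝ (Fin n), x.ofLp ⬝ᵥ y.ofLp = inner ℝ x y := by
    intro x y
    rw [EuclideanSpace.inner_eq_star_dotProduct, star_trivial, dotProduct_comm]
  have hT : ∀ x : EuclideanSpace ℝ (Fin n),
      (Matrix.toEuclideanCLM (𝕜 := ℝ) Z x).ofLp = Z *ᵥ x.ofLp := by
    intro x
    exact Matrix.ofLp_toEuclideanCLM Z x
  have hsym : ∀ u v : Fin n → ℝ, (Z *ᵥ u) ⬝ᵥ v = u ⬝ᵥ (Z *ᵥ v) := by
    intro u v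
    rw [dotProduct_mulVec, ← mulVec_transpose, hZ.eq]
  constructor
  · rintro ⟨hp, hm⟩
    have key : ∀ x : EuclideanSpace ℝ (Fin n), x ≠ 0 →
        ‖Matrix.toEuclideanCLM (𝕜 := ℝ) Z x‖ < ‖x‖ := by
      intro x hx
      have hx' : x.ofLp ≠ 0 := by
        intro h; apply hx; ext i; simp [h]
      set u := x.ofLp with hu
      have h1 := hp.posSemidef.dotProduct_mulVec_nonneg (u - Z *ᵥ u)
      have h2 := hm.posSemidef.dotProduct_mulVec_nonneg (u + Z *ᵥ u)
      have h3 := hp.dotProduct_mulVec_pos hx'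
      have h4 := hm.dotProduct_mulVec_pos hx'
      have hlt : (Z *ᵥ u) ⬝ᵥ (Z *ᵥ u) < u ⬝ᵥ u := by
        by_cases h0 : u - Z *ᵥ u = 0
        · exfalso
          rw [Matrix.sub_mulVec, Matrix.one_mulVec, h0] at h4
          simp at h4
        · have h1 := hp.dotProduct_mulVec_pos h0
          simp only [star_trivial, Matrix.add_mulVec, Matrix.sub_mulVec, Matrix.one_mulVec,
            Matrix.mulVec_add, Matrix.mulVec_sub, dotProduct_add, dotProduct_sub,
            add_dotProduct, sub_dotProduct, hsym] at h1 h2 ⊢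
          linarith
      rw [← hT, hin, hu, hin, real_inner_self_eq_norm_sq, real_inner_self_eq_norm_sq] at hlt
      exact lt_of_pow_lt_pow_left₀ 2 (norm_nonneg _) hlt
    obtain ⟨x₀, hx₀, hmax⟩ := (isCompact_closedBall (0 : EuclideanSpace ℝ (Fin n)) 1).exists_isMaxOn
      ⟨0, by simp⟩ (f := fun x => ‖Matrix.toEuclideanCLM (𝕜 := ℝ) Z x‖) (by fun_prop)
    have hlt : ‖Matrix.toEuclideanCLM (𝕜 := ℝ) Z x₀‖ < 1 := by
      by_cases h : x₀ = 0
      · simp [h]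
      · exact (key x₀ h).trans_le (by simpa using hx₀)
    refine lt_of_le_of_lt (ContinuousLinearMap.opNorm_le_of_unit_norm (norm_nonneg _) ?_) hlt
    intro x hx
    exact hmax (by simp [hx])
  · intro h
    have key : ∀ u : Fin n → ℝ, u ≠ 0 → |u ⬝ᵥ (Z *ᵥ u)| < u ⬝ᵥ u := by
      intro u hu
      obtain ⟨x, rfl⟩ : ∃ x : EuclideanSpace ℝ (Fin n), x.ofLp = u := ⟨WithLp.toLp 2 u, rfl⟩
      have hx : x ≠ 0 := by
        rintro rfl; exact hu rfl
      rw [← hT, hin, hin, real_inner_self_eq_norm_sq]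
      have h1 := abs_real_inner_le_norm x (Matrix.toEuclideanCLM (𝕜 := ℝ) Z x)
      have h2 := (Matrix.toEuclideanCLM (𝕜 := ℝ) Z).le_opNorm x
      have h3 : 0 < ‖x‖ := norm_pos_iff.mpr hx
      nlinarith [mul_pos h3 h3]
    refine ⟨.of_dotProduct_mulVec_pos (Matrix.isHermitian_one.add hH) ?_,
      .of_dotProduct_mulVec_pos (Matrix.isHermitian_one.sub hH) ?_⟩
    · intro u hu
      have := abs_lt.mp (key u hu)
      simp only [star_trivial, Matrix.add_mulVec, Matrix.one_mulVec, dotProduct_add]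
      linarith
    · intro u hu
      have := abs_lt.mp (key u hu)
      simp only [star_trivial, Matrix.sub_mulVec, Matrix.one_mulVec, dotProduct_sub]
      linarith
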